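/- Let λ ≥ 1 and λ± = (1 ± √λ)². Define q_0(x) = 1 and, for n ≥ 1, q_n(x) = λ^{(n-1)/2}(x-λ)·U_{n-1}((x-λ-1)/(2√λ)) − λ^{n/2}·U_{n-2}((x-λ-1)/(2√λ)) (with the convention U_{-1} = 0). Then for all natural numbers m ≠ n, ∫_{λ₋}^{λ₊} q_m(x) q_n(x) · √((λ₊-x)(x-λ₋))/(2πx) dx = 0; that is, the q_n are orthogonal with respect to the Marchenko–Pastur law. -/

import Mathlib

open Real Polynomial

/-- The polynomials orthogonal with respect to the Marchenko–Pastur law, written in terms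
of Chebyshev polynomials of the second kind `U`. -/
noncomputable def mpOrthoPoly (l : ℝ) (n : ℕ) (x : ℝ) : ℝ :=
  if n = 0 then 1
  else
    l ^ (((n : ℝ) - 1) / 2) * (x - l) *
        (Polynomial.Chebyshev.U ℝ ((n : ℤ) - 1)).eval ((x - l - 1) / (2 * Real.sqrt l)) -
      l ^ ((n : ℝ) / 2) *
        (Polynomial.Chebyshev.U ℝ ((n : ℤ) - 2)).eval ((x - l - 1) / (2 * Real.sqrt l))

/-!
Write `l = s²` with `s ≥ 1` and put `x = |1 + s z|²` with `z` on the upper unit semicircle. The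
Marchenko–Pastur density becomes a multiple of `(s Im z)² / |1 + s z|²` and
`q_n(x) · s Im z = sⁿ Im (zⁿ (1 + s z))`, so for `n = m + k` the integrand is a multiple of
`Re (zᵏ - z²ᵐ⁺ᵏ (1 + s z)² / |1 + s z|²) = Re (zᵏ - z²ᵐ⁺ᵏ⁺¹ b(z))`, where
`b(z) = (1 + s z) / (z + s)`. Since `s ≥ 1`, the pole `-s` of `b` is not in the open disc, and the
mean value property evaluates the integral as the value at `z = 0`, which vanishes for `k ≥ 1`.
-/

open ComplexConjugate Metric

lemma circleAverage_eq_integral_zero_pi {E : Type*} [NormedAddCommGroup E] [NormedSpace ℝ E]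
    {f : ℂ → E} {c R : ℝ} (hf : CircleIntegrable f c R) (hconj : ∀ z, f (conj z) = f z) :
    circleAverage f c R = π⁻¹ • ∫ θ in 0..π, f (circleMap c R θ) := by
  have reflect (θ : ℝ) : f (circleMap c R (2 * π - θ)) = f (circleMap c R θ) := by
    rw [(periodic_circleMap (c : ℂ) R).sub_eq', ← hconj (circleMap c R θ), conj_circleMap,
      Complex.conj_ofReal]
  have lower_half : ∫ θ in π..2 * π, f (circleMap c R θ) = ∫ θ in 0..π, f (circleMap c R θ) :=
    calc
      _ = ∫ θ in 0..π, f (circleMap c R (2 * π - θ)) := by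
        rw [intervalIntegral.integral_comp_sub_left fun θ => f (circleMap c R θ), sub_zero,
          two_mul, add_sub_cancel_right]
      _ = _ := by simp only [reflect]
  have hπ : π ∈ Set.uIcc 0 (2 * π) := by
    rw [Set.uIcc_of_le two_pi_pos.le]
    constructor <;> linarith [pi_pos]
  rw [circleAverage_def, ← intervalIntegral.integral_add_adjacent_intervals
    (hf.mono_set (Set.uIcc_subset_uIcc_left hπ)) (hf.mono_set (Set.uIcc_subset_uIcc_right hπ)),
    lower_half, ← two_smul ℝ, smul_smul]
  congr 1
  field_simp

lemma integral_re_circleMap_zero_pi {f : ℂ → ℂ} {c R : ℝ}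
    (hf : DiffContOnCl ℂ f (ball c |R|)) (hconj : ∀ z, f (conj z) = conj (f z)) :
    ∫ θ in 0..π, (f (circleMap c R θ)).re = π * (f c).re := by
  rcases eq_or_ne R 0 with rfl | hR
  · simp
  have hcont : ContinuousOn f (sphere c |R|) := hf.continuousOn.mono <| by
    rw [closure_ball _ (abs_ne_zero.mpr hR)]
    exact sphere_subset_closedBall
  have hre : circleAverage (fun z => (f z).re) c R = (f c).re := by
    rw [← hf.circleAverage]
    exact Complex.reCLM.circleAverage_comp_comm hcont.circleIntegrable'
  have hfold := circleAverage_eq_integral_zero_pi (f := fun z => (f z).re) (c := c) (R := R)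
    (Complex.continuous_re.comp_continuousOn hcont).circleIntegrable'
    fun z => by rw [hconj, Complex.conj_re]
  rw [← hre, hfold, smul_eq_mul, mul_inv_cancel_left₀ pi_ne_zero]

section UnitCircle

variable {z : ℂ}

lemma re_sq_add_im_sq_of_norm_eq_one (hz : ‖z‖ = 1) : z.re ^ 2 + z.im ^ 2 = 1 := by
  rw [sq, sq, ← Complex.normSq_apply, Complex.normSq_eq_norm_sq, hz, one_pow]

lemma normSq_one_add_ofReal_mul (hz : ‖z‖ = 1) (s : ℝ) :
    Complex.normSq (1 + s * z) = 1 + s ^ 2 + 2 * s * z.re := by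
  rw [Complex.normSq_add, map_one, one_mul, Complex.conj_re, Complex.re_ofReal_mul,
    Complex.normSq_eq_norm_sq, norm_mul, hz, mul_one, Complex.norm_real, norm_eq_abs, sq_abs]
  ring

lemma eval_chebyshev_U_re_mul_im (hz : ‖z‖ = 1) (n : ℤ) :
    (Chebyshev.U ℝ (n - 1)).eval z.re * z.im = (z ^ n).im := by
  obtain ⟨θ, rfl⟩ := (Complex.norm_eq_one_iff z).mp hz
  rw [← Complex.exp_int_mul, ← mul_assoc, ← Complex.ofReal_intCast, ← Complex.ofReal_mul,
    Complex.exp_ofReal_mul_I_re, Complex.exp_ofReal_mul_I_im, Complex.exp_ofReal_mul_I_im,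
    Chebyshev.U_real_cos, Int.cast_sub, Int.cast_one, sub_add_cancel]

lemma im_pow_mul_mul_im_pow_add_mul (hz : ‖z‖ = 1) (w : ℂ) (m k : ℕ) :
    (z ^ m * w).im * (z ^ (m + k) * w).im =
      (Complex.normSq w * (z ^ k).re - (z ^ (2 * m + k) * w ^ 2).re) / 2 := by
  have im_mul_im (u v : ℂ) : u.im * v.im = ((conj u * v).re - (u * v).re) / 2 := by
    simp only [Complex.mul_re, Complex.conj_re, Complex.conj_im]
    ring
  have conj_mul : conj (z ^ m * w) * (z ^ (m + k) * w) = Complex.normSq w * z ^ k := by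
    have hzm : conj (z ^ m) * z ^ m = 1 := by
      rw [Complex.conj_mul', norm_pow, hz]
      simp
    rw [map_mul, pow_add, Complex.normSq_eq_conj_mul_self]
    linear_combination conj w * w * z ^ k * hzm
  rw [im_mul_im, conj_mul, Complex.re_ofReal_mul]
  ring_nf

end UnitCircle

lemma add_ne_zero_of_norm_lt {z w : ℂ} (h : ‖z‖ < ‖w‖) : z + w ≠ 0 := fun h₀ => by
  rw [eq_neg_of_add_eq_zero_left h₀, norm_neg] at h
  exact h.false

lemma one_add_ofReal_mul_ne_zero (s : ℝ) {z : ℂ} (hz : z.im ≠ 0) : 1 + s * z ≠ 0 := by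
  intro h
  have him : s * z.im = 0 := by simpa using congrArg Complex.im h
  rcases mul_eq_zero.mp him with rfl | h'
  · simp at h
  · exact hz h'

/-- The Blaschke factor `(1 + s z) / (z + s)` of the unit disc with zero at `-1/s`, which extends
`(1 + s z)² / (z |1 + s z|²)` from the unit circle holomorphically to the disc. For `s = 1` the
quotient is `1` with a removable singularity at `-1`, where division would give `0`; this case is
separated so that the factor is continuous on the closed disc. -/
noncomputable def blaschkeFactor (s : ℝ) (z : ℂ) : ℂ :=
  if s = 1 then 1 else (1 + s * z) / (z + s)

namespace blaschkeFactor

variable {s : ℝ}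

lemma map_conj (s : ℝ) (z : ℂ) : blaschkeFactor s (conj z) = conj (blaschkeFactor s z) := by
  unfold blaschkeFactor
  split_ifs <;> simp

lemma add_ofReal_ne_zero (hs : 1 < s) {z : ℂ} (hz : ‖z‖ ≤ 1) : z + s ≠ 0 :=
  add_ne_zero_of_norm_lt <| by
    rw [Complex.norm_real]
    exact hz.trans_lt (hs.trans_le (le_norm_self s))

lemma mul_add_ofReal (hs : 1 ≤ s) {z : ℂ} (hz : ‖z‖ ≤ 1) :
    blaschkeFactor s z * (z + s) = 1 + s * z := by
  rcases hs.eq_or_lt with rfl | hs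
  · simp [blaschkeFactor, add_comm]
  · rw [blaschkeFactor, if_neg hs.ne', div_mul_cancel₀ _ (add_ofReal_ne_zero hs hz)]

protected lemma diffContOnCl (hs : 1 ≤ s) : DiffContOnCl ℂ (blaschkeFactor s) (ball 0 1) := by
  rcases hs.eq_or_lt with rfl | hs
  · rw [show blaschkeFactor 1 = fun _ => 1 from funext fun _ => if_pos rfl]
    exact diffContOnCl_const
  · refine DifferentiableOn.diffContOnCl fun z hz => DifferentiableAt.differentiableWithinAt ?_
    rw [closure_ball _ one_ne_zero, mem_closedBall_zero_iff] at hz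
    unfold blaschkeFactor
    simp only [hs.ne', if_false]
    fun_prop (disch := exact add_ofReal_ne_zero hs hz)

lemma mul_normSq (hs : 1 ≤ s) {z : ℂ} (hz : ‖z‖ = 1) :
    z * blaschkeFactor s z * Complex.normSq (1 + s * z) = (1 + s * z) ^ 2 := by
  have hzz : conj z * z = 1 := by simp [Complex.conj_mul', hz]
  have hb := mul_add_ofReal hs hz.le
  rw [Complex.normSq_eq_conj_mul_self, map_add, map_mul, map_one, Complex.conj_ofReal]
  linear_combination (1 + s * z) * (hb + blaschkeFactor s z * s * hzz)

end blaschkeFactor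

lemma circleMap_zero_one_im (θ : ℝ) : (circleMap 0 1 θ).im = sin θ := by
  rw [circleMap_zero, Complex.im_ofReal_mul, Complex.exp_ofReal_mul_I_im, one_mul]

lemma normSq_one_add_ofReal_mul_circleMap (s θ : ℝ) :
    Complex.normSq (1 + s * circleMap 0 1 θ) = 1 + s ^ 2 + 2 * s * cos θ := by
  rw [normSq_one_add_ofReal_mul (by simp), circleMap_zero_re, one_mul]

lemma integral_eq_integral_comp_normSq {s : ℝ} (hs : 0 ≤ s) (g : ℝ → ℝ) :
    ∫ x in (1 - s) ^ 2..(1 + s) ^ 2, g x =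
      ∫ θ in 0..π, g (Complex.normSq (1 + s * circleMap 0 1 θ)) * (2 * s * sin θ) := by
  simp only [normSq_one_add_ofReal_mul_circleMap]
  have hderiv (θ : ℝ) :
      HasDerivAt (fun θ => 1 + s ^ 2 + 2 * s * cos θ) (-(2 * s * sin θ)) θ := by
    simpa using ((hasDerivAt_cos θ).const_mul (2 * s)).const_add (1 + s ^ 2)
  have hsubst := intervalIntegral.integral_comp_mul_deriv_of_deriv_nonpos (a := 0) (b := π)
    (f := fun θ => 1 + s ^ 2 + 2 * s * cos θ) (f' := fun θ => -(2 * s * sin θ)) (g := g)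
    (by fun_prop) (fun θ _ => hderiv θ) fun θ hθ => by
      rw [min_eq_left pi_pos.le, max_eq_right pi_pos.le] at hθ
      have := sin_pos_of_mem_Ioo hθ
      exact neg_nonpos.mpr (by positivity)
  have hπ : 1 + s ^ 2 + 2 * s * cos π = (1 - s) ^ 2 := by rw [cos_pi]; ring
  have h₀ : 1 + s ^ 2 + 2 * s * cos 0 = (1 + s) ^ 2 := by rw [cos_zero]; ring
  simp only [Function.comp_apply, mul_neg, intervalIntegral.integral_neg, hπ, h₀] at hsubst
  rw [intervalIntegral.integral_symm, ← hsubst, neg_neg]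

lemma integral_mul_marchenkoPastur_density {s : ℝ} (hs : 0 ≤ s) (g : ℝ → ℝ) :
    ∫ x in (1 - s) ^ 2..(1 + s) ^ 2,
        g x * (√(((1 + s) ^ 2 - x) * (x - (1 - s) ^ 2)) / (2 * π * x)) =
      2 / π * ∫ θ in 0..π, g (Complex.normSq (1 + s * circleMap 0 1 θ)) *
        ((s * (circleMap 0 1 θ).im) ^ 2 / Complex.normSq (1 + s * circleMap 0 1 θ)) := by
  rw [integral_eq_integral_comp_normSq hs fun x =>
      g x * (√(((1 + s) ^ 2 - x) * (x - (1 - s) ^ 2)) / (2 * π * x)),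
    ← intervalIntegral.integral_const_mul]
  refine intervalIntegral.integral_congr fun θ hθ => ?_
  have hsin : 0 ≤ sin θ := sin_nonneg_of_mem_Icc (Set.uIcc_of_le pi_pos.le ▸ hθ)
  have hsqrt : √(((1 + s) ^ 2 - (1 + s ^ 2 + 2 * s * cos θ)) *
      (1 + s ^ 2 + 2 * s * cos θ - (1 - s) ^ 2)) = 2 * s * sin θ := by
    rw [← sqrt_sq (by positivity : 0 ≤ 2 * s * sin θ)]
    congr 1
    linear_combination -4 * s ^ 2 * sin_sq θ
  simp only [circleMap_zero_one_im, normSq_one_add_ofReal_mul_circleMap, hsqrt]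
  field_simp

lemma mpOrthoPoly_sq_succ {s : ℝ} (hs : 0 ≤ s) (n : ℕ) (x : ℝ) :
    mpOrthoPoly (s ^ 2) (n + 1) x =
      s ^ n * (x - s ^ 2) * (Chebyshev.U ℝ n).eval ((x - s ^ 2 - 1) / (2 * s)) -
        s ^ (n + 1) * (Chebyshev.U ℝ (n - 1)).eval ((x - s ^ 2 - 1) / (2 * s)) := by
  have sq_rpow_half (k : ℕ) : (s ^ 2) ^ ((k : ℝ) / 2) = s ^ k := by
    rw [← rpow_natCast_mul hs, Nat.cast_ofNat, mul_div_cancel₀ _ two_ne_zero, rpow_natCast]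
  have cast_sub_two : ((n + 1 : ℕ) : ℤ) - 2 = n - 1 := by lia
  rw [mpOrthoPoly, if_neg n.succ_ne_zero, sqrt_sq hs, sq_rpow_half, cast_sub_two, Nat.cast_succ,
    Nat.cast_succ, add_sub_cancel_right, add_sub_cancel_right, sq_rpow_half]

lemma mpOrthoPoly_normSq_mul_im {s : ℝ} (hs : 0 < s) {z : ℂ} (hz : ‖z‖ = 1) (n : ℕ) :
    mpOrthoPoly (s ^ 2) n (Complex.normSq (1 + s * z)) * (s * z.im) =
      s ^ n * (z ^ n * (1 + s * z)).im := by
  cases n with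
  | zero => simp [mpOrthoPoly]
  | succ k =>
    have cos_eq : (Complex.normSq (1 + s * z) - s ^ 2 - 1) / (2 * s) = z.re := by
      rw [normSq_one_add_ofReal_mul hz]
      field_simp
      ring
    have im_pow_succ := eval_chebyshev_U_re_mul_im hz (k + 1)
    have im_pow := eval_chebyshev_U_re_mul_im hz k
    rw [zpow_natCast] at im_pow
    rw [add_sub_cancel_right] at im_pow_succ
    norm_cast at im_pow_succ
    have recurrence : (z ^ (k + 1) * z).im = 2 * z.re * (z ^ (k + 1)).im - (z ^ k).im := by
      simp only [pow_succ, Complex.mul_im, Complex.mul_re]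
      linear_combination -(z ^ k).im * re_sq_add_im_sq_of_norm_eq_one hz
    have expand : (z ^ (k + 1) * (1 + s * z)).im = (z ^ (k + 1)).im + s * (z ^ (k + 1) * z).im := by
      rw [mul_one_add, mul_left_comm, Complex.add_im, Complex.im_ofReal_mul]
    rw [mpOrthoPoly_sq_succ hs.le, cos_eq, normSq_one_add_ofReal_mul hz, expand, recurrence]
    linear_combination s ^ (k + 1) * (1 + 2 * s * z.re) * im_pow_succ - s ^ (k + 2) * im_pow

lemma mpOrthoPoly_mul_mpOrthoPoly_normSq {s : ℝ} (hs : 1 ≤ s) {z : ℂ} (hz : ‖z‖ = 1)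
    (hw : 1 + s * z ≠ 0) (m k : ℕ) :
    mpOrthoPoly (s ^ 2) m (Complex.normSq (1 + s * z)) *
        mpOrthoPoly (s ^ 2) (m + k) (Complex.normSq (1 + s * z)) *
        ((s * z.im) ^ 2 / Complex.normSq (1 + s * z)) =
      s ^ (2 * m + k) / 2 * (z ^ k - z ^ (2 * m + k + 1) * blaschkeFactor s z).re := by
  have hs₀ : 0 < s := by linarith
  set x := Complex.normSq (1 + s * z) with hx
  set h := z ^ k - z ^ (2 * m + k + 1) * blaschkeFactor s z with hh
  have hx₀ : x ≠ 0 := by simpa [hx] using hw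
  calc
    _ = mpOrthoPoly (s ^ 2) m x * (s * z.im) *
          (mpOrthoPoly (s ^ 2) (m + k) x * (s * z.im)) / x := by
      ring
    _ = s ^ (2 * m + k) * ((z ^ m * (1 + s * z)).im * (z ^ (m + k) * (1 + s * z)).im) / x := by
      rw [mpOrthoPoly_normSq_mul_im hs₀ hz, mpOrthoPoly_normSq_mul_im hs₀ hz]
      ring
    _ = s ^ (2 * m + k) * (x * h.re / 2) / x := by
      rw [im_pow_mul_mul_im_pow_add_mul hz, ← blaschkeFactor.mul_normSq hs hz, ← hx, hh,
        ← Complex.re_ofReal_mul, ← Complex.re_ofReal_mul, ← Complex.sub_re]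
      ring_nf
    _ = _ := by
      field_simp

lemma integral_re_pow_sub_pow_mul_blaschkeFactor {s : ℝ} (hs : 1 ≤ s) {k : ℕ} (hk : k ≠ 0)
    (j : ℕ) :
    ∫ θ in 0..π, (circleMap 0 1 θ ^ k -
      circleMap 0 1 θ ^ (j + 1) * blaschkeFactor s (circleMap 0 1 θ)).re = 0 := by
  have hdiff : DiffContOnCl ℂ (fun z => z ^ k - z ^ (j + 1) * blaschkeFactor s z) (ball 0 1) := by
    have hpow (i : ℕ) : DiffContOnCl ℂ (fun z : ℂ => z ^ i) (ball 0 1) :=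
      (differentiable_pow i).diffContOnCl
    exact (hpow k).sub ((hpow (j + 1)).smul (blaschkeFactor.diffContOnCl hs))
  have hmean := integral_re_circleMap_zero_pi (c := 0) (R := 1) (by simpa using hdiff)
    fun z => by simp only [map_sub, map_mul, map_pow, blaschkeFactor.map_conj]
  simpa [hk] using hmean

lemma integral_mpOrthoPoly_mul_mpOrthoPoly_add {s : ℝ} (hs : 1 ≤ s) (m : ℕ) {k : ℕ}
    (hk : k ≠ 0) :
    ∫ x in (1 - s) ^ 2..(1 + s) ^ 2, mpOrthoPoly (s ^ 2) m x * mpOrthoPoly (s ^ 2) (m + k) x *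
        (√(((1 + s) ^ 2 - x) * (x - (1 - s) ^ 2)) / (2 * π * x)) = 0 := by
  rw [integral_mul_marchenkoPastur_density (by linarith)
    fun x => mpOrthoPoly (s ^ 2) m x * mpOrthoPoly (s ^ 2) (m + k) x]
  have im_ne_zero {θ : ℝ} (hθ : θ ∈ Set.Ioo 0 π) : (circleMap 0 1 θ).im ≠ 0 := by
    rw [circleMap_zero_one_im]
    exact (sin_pos_of_mem_Ioo hθ).ne'
  rw [intervalIntegral.integral_congr_Ioo_of_le pi_pos.le fun θ hθ =>
      mpOrthoPoly_mul_mpOrthoPoly_normSq hs (by simp)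
        (one_add_ofReal_mul_ne_zero s (im_ne_zero hθ)) m k,
    intervalIntegral.integral_const_mul, integral_re_pow_sub_pow_mul_blaschkeFactor hs hk,
    mul_zero, mul_zero]

/-- The polynomials `q_n` are orthogonal with respect to the Marchenko–Pastur law. -/
theorem mpOrthoPoly_orthogonal (l : ℝ) (hl : 1 ≤ l) (lm lp : ℝ)
    (hlm : lm = (1 - Real.sqrt l) ^ 2) (hlp : lp = (1 + Real.sqrt l) ^ 2)
    (m n : ℕ) (hmn : m ≠ n) :
    ∫ x in lm..lp,
        mpOrthoPoly l m x * mpOrthoPoly l n x * (Real.sqrt ((lp - x) * (x - lm)) / (2 * π * x))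
      = 0 := by
  obtain ⟨s, hs, rfl⟩ : ∃ s : ℝ, 1 ≤ s ∧ l = s ^ 2 :=
    ⟨√l, one_le_sqrt.mpr hl, (sq_sqrt (by linarith)).symm⟩
  rw [sqrt_sq (by linarith)] at hlm hlp
  subst hlm hlp
  wlog hlt : m < n generalizing m n
  · simpa only [mul_comm] using this n m hmn.symm (by lia)
  obtain ⟨k, rfl⟩ := Nat.exists_eq_add_of_lt hlt
  exact integral_mpOrthoPoly_mul_mpOrthoPoly_add hs m k.succ_ne_zero
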